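/- Let q ∈ ℂ with 0 < |q| < 1, let A : ℤ → ℂ be any sequence, and let b, x, y ∈ ℂ with b ≠ 0, y ≠ 0, and x ≠ q^{-m} for every m ∈ ℕ. Assume the families (i,j) ↦ (q/b;q)_i y^i A_{i-j} (-1)^j q^{j(j-1)/2} (x/y)^j / ((q;q)_i (q;q)_j) and (i,j) ↦ (-1)^j q^{j(j-1)/2} (x/y)^j A_{i-j} (q^{1-j}/b;q)_i (q^j y)^i / ((q;q)_j (x;q)_j (q;q)_i), both indexed by ℕ×ℕ, are absolutely summable. Then ∑_{i≥0} [(q/b;q)_i y^i / (q;q)_i] · ∑_{j≥0} A_{i-j} τ(j) (x/y)^j / (q;q)_j = (x;q)_∞ · ∑_{j≥0} [τ(j) (x/y)^j / ((q;q)_j (x;q)_j)] · ∑_{i≥0} A_{i-j} (q^{1-j}/b;q)_i (q^j y)^i / (q;q)_i. -/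

import Mathlib

/-- The finite q-shifted factorial `(a;q)_n = ∏_{k=0}^{n-1} (1 - a q^k)`. -/
noncomputable def qPoch (a q : ℂ) (n : ℕ) : ℂ := ∏ k ∈ Finset.range n, (1 - a * q ^ k)

/-- The infinite q-shifted factorial `(a;q)_∞ = ∏_{k=0}^{∞} (1 - a q^k)`. -/
noncomputable def qPochInf (a q : ℂ) : ℂ := ∏' k : ℕ, (1 - a * q ^ k)

/-- `τ(n) = (-1)^n q^{n(n-1)/2}` for `n : ℕ`. -/
noncomputable def qTau (q : ℂ) (n : ℕ) : ℂ := (-1 : ℂ) ^ n * q ^ (n * (n - 1) / 2)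

/-!
Write `i = n⁺ + k`, `j = n⁻ + k`, so that `i - j = n` is constant along the diagonal indexed by
`n : ℤ`. Since `A` depends only on `i - j`, it suffices to compare the two double series diagonal by
diagonal. On each diagonal both sides are basic hypergeometric series in `k`, related by
the transformation
`∑ (a)_k τ(k) x^k / ((c)_k (q)_k) = (x)_∞ ∑ a^k (c/a)_k τ(k)² x^k / ((q)_k (x)_k (c)_k)`.
The latter follows by expanding `(x)_∞ / (x)_m = (x q^m)_∞` with Euler's series and summing the
resulting double series along antidiagonals by the q-Chu–Vandermonde formula.
-/

open Filter Topology Finset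

section FiniteIdentities

theorem qPoch_zero (a q : ℂ) : qPoch a q 0 = 1 := rfl

theorem qPoch_succ (a q : ℂ) (n : ℕ) : qPoch a q (n + 1) = qPoch a q n * (1 - a * q ^ n) :=
  prod_range_succ _ n

theorem qPoch_add (a q : ℂ) (m n : ℕ) :
    qPoch a q (m + n) = qPoch a q m * qPoch (a * q ^ m) q n := by
  simp only [qPoch, prod_range_add, pow_add, mul_assoc]

theorem qPoch_succ_left (a q : ℂ) (n : ℕ) :
    qPoch a q (n + 1) = (1 - a) * qPoch (a * q) q n := by
  simp only [qPoch, prod_range_succ', pow_zero, mul_one, pow_succ', mul_assoc, mul_comm]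

theorem qPoch_self_succ (q : ℂ) (n : ℕ) :
    qPoch q q (n + 1) = qPoch q q n * (1 - q ^ (n + 1)) := by
  rw [qPoch_succ, pow_succ']

theorem qPoch_mul_pow_ne_zero {a q : ℂ} (ha : ∀ n, qPoch a q n ≠ 0) (m n : ℕ) :
    qPoch (a * q ^ m) q n ≠ 0 :=
  right_ne_zero_of_mul (qPoch_add a q m n ▸ ha (m + n))

theorem qPoch_self_ne_zero {q : ℂ} (hq : ‖q‖ < 1) (n : ℕ) : qPoch q q n ≠ 0 := by
  refine prod_ne_zero_iff.mpr fun k _ h => ?_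
  have hlt : ‖q ^ (k + 1)‖ < 1 := by
    rw [norm_pow]
    exact pow_lt_one₀ (norm_nonneg q) hq k.succ_ne_zero
  rw [pow_succ', ← sub_eq_zero.mp h, norm_one] at hlt
  exact lt_irrefl 1 hlt

theorem qTau_succ (q : ℂ) (n : ℕ) : qTau q (n + 1) = -q ^ n * qTau q n := by
  have triangle : (n + 1) * (n + 1 - 1) / 2 = n + n * (n - 1) / 2 := by
    rw [← sum_range_id, ← sum_range_id, sum_range_succ, add_comm]
  rw [qTau, qTau, triangle]
  ring

theorem qTau_add (q : ℂ) (m n : ℕ) : qTau q (m + n) = qTau q m * qTau q n * q ^ (m * n) := by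
  induction n with
  | zero => simp [qTau]
  | succ n ih =>
    rw [← add_assoc, qTau_succ, ih, qTau_succ]
    ring

theorem qTau_sq_mul_pow (q : ℂ) (n : ℕ) : qTau q n ^ 2 * q ^ n = q ^ (n * n) := by
  induction n with
  | zero => simp [qTau]
  | succ n ih =>
    calc qTau q (n + 1) ^ 2 * q ^ (n + 1) = qTau q n ^ 2 * q ^ n * q ^ (2 * n + 1) := by
          rw [qTau_succ]
          ring
      _ = q ^ ((n + 1) * (n + 1)) := by
          rw [ih]
          ring

/-- The homogeneous q-shifted factorial `∏_{k=0}^{n-1} (a - c q^k)`, which is `a^n (c/a;q)_n` when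
`a ≠ 0` and stays meaningful for `a = 0`. -/
noncomputable def qPochHom (a c q : ℂ) (n : ℕ) : ℂ := ∏ k ∈ range n, (a - c * q ^ k)

theorem qPochHom_succ (a c q : ℂ) (n : ℕ) :
    qPochHom a c q (n + 1) = qPochHom a c q n * (a - c * q ^ n) :=
  prod_range_succ _ n

theorem qPochHom_succ_left (a c q : ℂ) (n : ℕ) :
    qPochHom a c q (n + 1) = (a - c) * qPochHom a (c * q) q n := by
  simp only [qPochHom, prod_range_succ', pow_zero, mul_one, pow_succ', mul_assoc, mul_comm]

theorem pow_mul_qPochHom (s a c q : ℂ) (n : ℕ) :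
    s ^ n * qPochHom a c q n = qPochHom (s * a) (s * c) q n := by
  simp only [qPochHom, mul_assoc, ← mul_sub, prod_mul_distrib, prod_const, card_range]

theorem qPoch_zpow_mul_mul_qTau {q : ℂ} (hq : q ≠ 0) (d : ℂ) (n : ℕ) :
    qPoch (q ^ (1 - n : ℤ) * d) q n * qTau q n = qPochHom d 1 q n := by
  induction n with
  | zero => simp [qPoch, qTau, qPochHom]
  | succ n ih =>
    have shift : q ^ (1 - (n + 1 : ℕ) : ℤ) * d * q = q ^ (1 - n : ℤ) * d := by
      rw [mul_right_comm, ← zpow_add_one₀ hq]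
      push_cast
      ring_nf
    have cancel : q ^ (1 - (n + 1 : ℕ) : ℤ) * q ^ n = 1 := by
      rw [← zpow_natCast, ← zpow_add₀ hq]
      simp
    rw [qPoch_succ_left, shift, qTau_succ, qPochHom_succ, ← ih]
    linear_combination d * qPoch (q ^ (1 - n : ℤ) * d) q n * qTau q n * cancel

/-- The splitting `1 - q^(m+n) = (1 - q^n) + q^n (1 - q^m)` behind the q-Pascal rule, summed over
`m + n = N + 1`. -/
theorem one_sub_pow_mul_sum_antidiagonal_succ {R : Type*} [CommRing R] (q : R) (F : ℕ × ℕ → R)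
    (N : ℕ) :
    (1 - q ^ (N + 1)) * ∑ p ∈ antidiagonal (N + 1), F p =
      ∑ p ∈ antidiagonal N, (1 - q ^ (p.2 + 1)) * F (p.1, p.2 + 1) +
        ∑ p ∈ antidiagonal N, q ^ p.2 * (1 - q ^ (p.1 + 1)) * F (p.1 + 1, p.2) := by
  have split : (1 - q ^ (N + 1)) * ∑ p ∈ antidiagonal (N + 1), F p =
      ∑ p ∈ antidiagonal (N + 1), (1 - q ^ p.2) * F p +
        ∑ p ∈ antidiagonal (N + 1), q ^ p.2 * (1 - q ^ p.1) * F p := by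
    rw [mul_sum, ← sum_add_distrib]
    refine sum_congr rfl fun p hp => ?_
    rw [← mem_antidiagonal.mp hp]
    ring
  rw [split, Nat.sum_antidiagonal_succ', Nat.sum_antidiagonal_succ (n := N)]
  simp only [pow_zero, sub_self, zero_mul, mul_zero, zero_add]

/-- The q-Chu–Vandermonde formula, cleared of the denominators `(c;q)_m`. -/
theorem sum_antidiagonal_qPochHom_mul_qTau_mul_qPoch {q : ℂ} (hq : ∀ n, qPoch q q n ≠ 0)
    (a c : ℂ) (N : ℕ) :
    ∑ p ∈ antidiagonal N, qPochHom a c q p.1 * qTau q p.1 * qPoch (c * q ^ p.1) q p.2 /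
      (qPoch q q p.1 * qPoch q q p.2) = qPoch a q N / qPoch q q N := by
  have hq' : ∀ n, 1 - q ^ (n + 1) ≠ 0 := fun n =>
    right_ne_zero_of_mul (qPoch_self_succ q n ▸ hq (n + 1))
  induction N generalizing c with
  | zero => simp [qPoch, qPochHom, qTau]
  | succ N ih =>
    refine mul_left_cancel₀ (hq' N) ?_
    rw [one_sub_pow_mul_sum_antidiagonal_succ]
    have lower_right : ∀ p ∈ antidiagonal N, (1 - q ^ (p.2 + 1)) *
        (qPochHom a c q p.1 * qTau q p.1 * qPoch (c * q ^ p.1) q (p.2 + 1) /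
          (qPoch q q p.1 * qPoch q q (p.2 + 1))) =
        (1 - c * q ^ N) * (qPochHom a c q p.1 * qTau q p.1 * qPoch (c * q ^ p.1) q p.2 /
          (qPoch q q p.1 * qPoch q q p.2)) := fun p hp => by
      rw [qPoch_self_succ, qPoch_succ, ← mem_antidiagonal.mp hp]
      field_simp [hq' p.2]
      ring
    have lower_left : ∀ p ∈ antidiagonal N, q ^ p.2 * (1 - q ^ (p.1 + 1)) *
        (qPochHom a c q (p.1 + 1) * qTau q (p.1 + 1) * qPoch (c * q ^ (p.1 + 1)) q p.2 /
          (qPoch q q (p.1 + 1) * qPoch q q p.2)) =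
        -q ^ N * (a - c) * (qPochHom a (c * q) q p.1 * qTau q p.1 *
          qPoch (c * q * q ^ p.1) q p.2 / (qPoch q q p.1 * qPoch q q p.2)) := fun p hp => by
      rw [qPoch_self_succ, qPochHom_succ_left, qTau_succ, pow_succ' q p.1, ← mul_assoc c,
        ← pow_succ', ← mem_antidiagonal.mp hp]
      field_simp [hq' p.1]
      ring
    rw [sum_congr rfl lower_right, sum_congr rfl lower_left, ← mul_sum, ← mul_sum, ih, ih,
      qPoch_succ, qPoch_self_succ]
    field_simp [hq' N]
    ring

end FiniteIdentities

section Euler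

variable {q : ℂ}

theorem summable_norm_of_tendsto_ratio_zero {R : Type*} [SeminormedRing R] {f g : ℕ → R}
    (hfg : ∀ n, f (n + 1) = g n * f n) (hg : Tendsto g atTop (𝓝 0)) :
    Summable fun n => ‖f n‖ := by
  have hg_lt : ∀ᶠ n in atTop, ‖g n‖ < 1 / 2 :=
    hg.norm.eventually_lt_const (by norm_num)
  refine summable_of_ratio_norm_eventually_le (r := 1 / 2) (by norm_num) ?_
  filter_upwards [hg_lt] with n hn
  rw [norm_norm, norm_norm, hfg]
  exact (norm_mul_le _ _).trans (mul_le_mul_of_nonneg_right hn.le (norm_nonneg _))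

theorem multipliable_one_sub_mul_pow (hq : ‖q‖ < 1) (a : ℂ) :
    Multipliable fun k : ℕ => 1 - a * q ^ k := by
  have hs : Summable fun k : ℕ => ‖-(a * q ^ k)‖ := by
    simp only [norm_neg, norm_mul, norm_pow]
    exact (summable_geometric_of_lt_one (norm_nonneg q) hq).mul_left _
  simpa only [sub_eq_add_neg] using multipliable_one_add_of_summable hs

theorem qPochInf_eq_qPoch_mul (hq : ‖q‖ < 1) (a : ℂ) (n : ℕ) :
    qPochInf a q = qPoch a q n * qPochInf (a * q ^ n) q := by
  have shift : ∀ k, 1 - a * q ^ n * q ^ k = 1 - a * q ^ (k + n) := fun k => by ring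
  have hm : Multipliable fun k => 1 - a * q ^ (k + n) :=
    (multipliable_one_sub_mul_pow hq (a * q ^ n)).congr shift
  simp only [qPochInf, qPoch, shift]
  exact (Multipliable.prod_mul_tprod_nat_mul' (f := fun k => 1 - a * q ^ k) hm).symm

/-- The general term of Euler's series `∑ τ(k) z^k / (q;q)_k`, whose sum is `(z;q)_∞`. -/
noncomputable def eulerTerm (q z : ℂ) (k : ℕ) : ℂ := qTau q k * z ^ k / qPoch q q k

theorem eulerTerm_succ (q z : ℂ) (k : ℕ) :
    eulerTerm q z (k + 1) = -q ^ k * z / (1 - q ^ (k + 1)) * eulerTerm q z k := by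
  rw [eulerTerm, eulerTerm, qTau_succ, qPoch_self_succ, div_mul_div_comm]
  ring

theorem eulerTerm_mul (q z w : ℂ) (k : ℕ) : eulerTerm q (z * w) k = eulerTerm q z k * w ^ k := by
  rw [eulerTerm, eulerTerm]
  ring

theorem norm_eulerTerm_mul_pow_le (hq : ‖q‖ ≤ 1) (z : ℂ) (n k : ℕ) :
    ‖eulerTerm q (z * q ^ n) k‖ ≤ ‖eulerTerm q z k‖ := by
  rw [eulerTerm_mul, norm_mul, norm_pow, norm_pow, ← pow_mul]
  exact mul_le_of_le_one_right (norm_nonneg _) (pow_le_one₀ (norm_nonneg q) hq)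

theorem summable_norm_eulerTerm (hq : ‖q‖ < 1) (z : ℂ) :
    Summable fun k => ‖eulerTerm q z k‖ := by
  refine summable_norm_of_tendsto_ratio_zero (eulerTerm_succ q z) ?_
  have hpow := tendsto_pow_atTop_nhds_zero_of_norm_lt_one hq
  have hpow_succ := hpow.comp (tendsto_add_atTop_nat 1)
  simpa using! (hpow.neg.mul_const z).div (hpow_succ.const_sub 1) (by simp)

theorem tsum_eulerTerm_eq_one_sub_mul (hq : ‖q‖ < 1) (z : ℂ) :
    ∑' k, eulerTerm q z k = (1 - z) * ∑' k, eulerTerm q (z * q) k := by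
  have hz := (summable_norm_eulerTerm hq z).of_norm
  have hzq := (summable_norm_eulerTerm hq (z * q)).of_norm
  have term_sub : ∀ k, eulerTerm q z (k + 1) - eulerTerm q (z * q) (k + 1) =
      -z * eulerTerm q (z * q) k := fun k => by
    have hne : 1 - q ^ (k + 1) ≠ 0 :=
      right_ne_zero_of_mul (qPoch_self_succ q k ▸ qPoch_self_ne_zero hq (k + 1))
    rw [eulerTerm_mul, eulerTerm_mul, eulerTerm_succ]
    field_simp
    ring
  have term_zero : eulerTerm q z 0 - eulerTerm q (z * q) 0 = 0 := by
    simp only [eulerTerm, pow_zero, sub_self]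
  have sub_eq : ∑' k, eulerTerm q z k - ∑' k, eulerTerm q (z * q) k =
      -z * ∑' k, eulerTerm q (z * q) k := by
    rw [← hz.tsum_sub hzq, (hz.sub hzq).tsum_eq_zero_add, ← tsum_mul_left]
    simp only [term_sub, term_zero, zero_add]
  linear_combination sub_eq

theorem tsum_eulerTerm_eq_qPoch_mul (hq : ‖q‖ < 1) (z : ℂ) (n : ℕ) :
    ∑' k, eulerTerm q z k = qPoch z q n * ∑' k, eulerTerm q (z * q ^ n) k := by
  induction n with
  | zero => simp [qPoch]
  | succ n ih =>
    rw [ih, tsum_eulerTerm_eq_one_sub_mul hq, qPoch_succ, pow_succ, mul_assoc, mul_assoc]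

theorem tendsto_tsum_eulerTerm_mul_pow (hq : ‖q‖ < 1) (z : ℂ) :
    Tendsto (fun n : ℕ => ∑' k, eulerTerm q (z * q ^ n) k) atTop (𝓝 1) := by
  have sum_at_zero : ∑' k, eulerTerm q z k * 0 ^ k = 1 := by
    rw [tsum_eq_single 0 fun k hk => by simp [hk]]
    simp [eulerTerm, qTau, qPoch]
  rw [← sum_at_zero]
  refine tendsto_tsum_of_dominated_convergence (summable_norm_eulerTerm hq z) (fun k => ?_)
    (Eventually.of_forall fun n k => norm_eulerTerm_mul_pow_le hq.le z n k)
  simp only [eulerTerm_mul]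
  exact ((tendsto_pow_atTop_nhds_zero_of_norm_lt_one hq).pow k).const_mul _

theorem tsum_eulerTerm (hq : ‖q‖ < 1) (z : ℂ) : ∑' k, eulerTerm q z k = qPochInf z q := by
  have qPoch_tendsto : Tendsto (qPoch z q) atTop (𝓝 (qPochInf z q)) :=
    (multipliable_one_sub_mul_pow hq z).hasProd.tendsto_prod_nat
  have lim := qPoch_tendsto.mul (tendsto_tsum_eulerTerm_mul_pow hq z)
  simp only [← tsum_eulerTerm_eq_qPoch_mul hq z, mul_one] at lim
  exact tendsto_nhds_unique tendsto_const_nhds lim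

end Euler

section Rearrangement

variable {E : Type*} [NormedAddCommGroup E] [CompleteSpace E] {f : ℕ × ℕ → E}

theorem tsum_eq_tsum_antidiagonal (hf : Summable f) :
    ∑' p, f p = ∑' n, ∑ p ∈ antidiagonal n, f p := by
  have hs := HasAntidiagonal.sigmaAntidiagonalEquivProd.summable_iff.mpr hf
  rw [← HasAntidiagonal.sigmaAntidiagonalEquivProd.tsum_eq f]
  refine hs.tsum_sigma.trans (tsum_congr fun n => ?_)
  rw [tsum_fintype, ← sum_coe_sort (antidiagonal n) f]
  rfl

/-- The parametrization of `ℕ × ℕ` by its diagonals: `(n, k)` is the `k`-th point with `i - j = n`,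
written `(n⁺ + k, n⁻ + k)` with `n⁺ = n.toNat` and `n⁻ = (-n).toNat`. -/
def diagonalEquiv : ℤ × ℕ ≃ ℕ × ℕ where
  toFun t := (t.1.toNat + t.2, (-t.1).toNat + t.2)
  invFun p := (p.1 - p.2, min p.1 p.2)
  left_inv := fun ⟨n, k⟩ => by
    ext <;> simp only <;> omega
  right_inv := fun ⟨i, j⟩ => by
    ext <;> simp only <;> omega

theorem tsum_eq_tsum_diagonal (hf : Summable f) :
    ∑' p, f p = ∑' (n : ℤ) (k : ℕ), f (n.toNat + k, (-n).toNat + k) := by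
  rw [← diagonalEquiv.tsum_eq f]
  exact (diagonalEquiv.summable_iff.mpr hf).tsum_prod

end Rearrangement

section Transformation

variable {q : ℂ}

theorem summable_mul_eulerTerm_mul_pow (hq : ‖q‖ < 1) {f : ℕ → ℂ} (hf : Summable fun m => ‖f m‖)
    (x : ℂ) : Summable fun p : ℕ × ℕ => f p.1 * eulerTerm q (x * q ^ p.1) p.2 := by
  refine Summable.of_norm_bounded (hf.mul_of_nonneg (summable_norm_eulerTerm hq x)
    (fun _ => norm_nonneg _) fun _ => norm_nonneg _) fun p => ?_
  rw [norm_mul]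
  exact mul_le_mul_of_nonneg_left (norm_eulerTerm_mul_pow_le hq.le x p.1 p.2) (norm_nonneg _)

theorem summable_norm_qPochHom_mul_qTau_sq (hq : ‖q‖ < 1) (a c x : ℂ) :
    Summable fun m =>
      ‖qPochHom a c q m * qTau q m ^ 2 * x ^ m / (qPoch q q m * qPoch c q m)‖ := by
  refine summable_norm_of_tendsto_ratio_zero (g := fun m =>
    (a - c * q ^ m) * (q ^ m * q ^ m * x) / ((1 - q * q ^ m) * (1 - c * q ^ m)))
    (fun m => ?_) ?_
  · rw [qTau_succ, qPoch_succ, qPoch_succ, qPochHom_succ, div_mul_div_comm]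
    ring
  · have hpow := tendsto_pow_atTop_nhds_zero_of_norm_lt_one hq
    simpa using! (((hpow.const_mul c).const_sub a).mul ((hpow.mul hpow).mul_const x)).div
      (((hpow.const_mul q).const_sub 1).mul ((hpow.const_mul c).const_sub 1)) (by simp)

theorem qPoch_mul_qTau_div_eq_sum_antidiagonal (hq : ∀ n, qPoch q q n ≠ 0) {c : ℂ}
    (hc : ∀ n, qPoch c q n ≠ 0) (a x : ℂ) (N : ℕ) :
    qPoch a q N * qTau q N * x ^ N / (qPoch c q N * qPoch q q N) =
      ∑ p ∈ antidiagonal N, qPochHom a c q p.1 * qTau q p.1 ^ 2 * x ^ p.1 /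
        (qPoch q q p.1 * qPoch c q p.1) * eulerTerm q (x * q ^ p.1) p.2 := by
  calc qPoch a q N * qTau q N * x ^ N / (qPoch c q N * qPoch q q N)
      = qTau q N * x ^ N / qPoch c q N * (qPoch a q N / qPoch q q N) := by ring
    _ = _ := by
      rw [← sum_antidiagonal_qPochHom_mul_qTau_mul_qPoch hq a c, mul_sum]
      refine sum_congr rfl fun p hp => ?_
      have hshift := qPoch_mul_pow_ne_zero hc p.1 p.2
      rw [← mem_antidiagonal.mp hp, qTau_add, qPoch_add c, eulerTerm]
      field_simp
      ring

/-- A limiting case of Jackson's transformation of `₂φ₁` into `₂φ₂`. -/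
theorem tsum_qPoch_mul_qTau_eq (hq : ‖q‖ < 1) {c x : ℂ} (hc : ∀ n, qPoch c q n ≠ 0)
    (hx : ∀ n, qPoch x q n ≠ 0) (a : ℂ) :
    ∑' k, qPoch a q k * qTau q k * x ^ k / (qPoch c q k * qPoch q q k) =
      qPochInf x q * ∑' k, qPochHom a c q k * qTau q k ^ 2 * x ^ k /
        (qPoch q q k * qPoch x q k * qPoch c q k) := by
  have hs := summable_mul_eulerTerm_mul_pow hq (summable_norm_qPochHom_mul_qTau_sq hq a c x) x
  simp only [qPoch_mul_qTau_div_eq_sum_antidiagonal (qPoch_self_ne_zero hq) hc]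
  rw [← tsum_eq_tsum_antidiagonal hs, hs.tsum_prod, ← tsum_mul_left]
  refine tsum_congr fun m => ?_
  have hxm := hx m
  dsimp only
  rw [tsum_mul_left, tsum_eulerTerm hq, qPochInf_eq_qPoch_mul hq x m]
  field_simp

end Transformation

section Diagonals

variable {q : ℂ}

/-- The coefficient of `A (i - j)` in the double series on the left-hand side. -/
noncomputable def leftTerm (q b x y : ℂ) (i j : ℕ) : ℂ :=
  qPoch (q / b) q i * y ^ i * qTau q j * (x / y) ^ j / (qPoch q q i * qPoch q q j)

/-- The coefficient of `A (i - j)` in the double series on the right-hand side, without the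
factor `(x;q)_∞`. -/
noncomputable def rightTerm (q b x y : ℂ) (i j : ℕ) : ℂ :=
  qTau q j * (x / y) ^ j * qPoch (q ^ (1 - j : ℤ) / b) q i * (q ^ j * y) ^ i /
    (qPoch q q j * qPoch x q j * qPoch q q i)

theorem pow_mul_div_pow_add {y : ℂ} (hy : y ≠ 0) (x : ℂ) (u v k : ℕ) :
    y ^ (u + k) * (x / y) ^ (v + k) = y ^ u * (x / y) ^ v * x ^ k := by
  calc y ^ (u + k) * (x / y) ^ (v + k) = y ^ u * (x / y) ^ v * (y * (x / y)) ^ k := by ring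
    _ = _ := by rw [mul_div_cancel₀ x hy]

theorem qPoch_self_add_mul_qPoch_self_add (q : ℂ) {u v : ℕ} (huv : u = 0 ∨ v = 0) (k : ℕ) :
    qPoch q q (u + k) * qPoch q q (v + k) =
      qPoch q q u * qPoch q q v * (qPoch q q k * qPoch (q * q ^ (u + v)) q k) := by
  rcases huv with rfl | rfl
  · rw [qPoch_add q q v, zero_add, zero_add, qPoch_zero]
    ring
  · rw [qPoch_add q q u, zero_add, add_zero, qPoch_zero]
    ring

theorem qPoch_zpow_div_add (hq : q ≠ 0) (b : ℂ) {u v : ℕ} (huv : u = 0 ∨ v = 0) (k : ℕ) :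
    qPoch (q ^ (1 - (v + k : ℕ) : ℤ) / b) q (u + k) =
      qPoch (q ^ (1 - k : ℤ) * (q ^ (-v : ℤ) / b)) q k * qPoch (q / b) q u := by
  have base : q ^ (1 - (v + k : ℕ) : ℤ) / b = q ^ (1 - k : ℤ) * (q ^ (-v : ℤ) / b) := by
    rw [← mul_div_assoc, ← zpow_add₀ hq]
    push_cast
    ring_nf
  rw [base]
  rcases huv with rfl | rfl
  · rw [zero_add, qPoch_zero, mul_one]
  · have endpoint : q ^ (1 - k : ℤ) * (q ^ (-(0 : ℕ) : ℤ) / b) * q ^ k = q / b := by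
      rw [mul_right_comm, ← zpow_natCast q k, ← zpow_add₀ hq]
      simp [div_eq_mul_inv]
    rw [add_comm u k, qPoch_add, endpoint]

theorem pow_add_pow_add_eq_mul_qTau_sq (q : ℂ) {u v : ℕ} (huv : u = 0 ∨ v = 0) (k : ℕ) :
    (q ^ (v + k)) ^ (u + k) = (q * q ^ (u + v)) ^ k * qTau q k ^ 2 := by
  calc (q ^ (v + k)) ^ (u + k) = q ^ (v * u) * q ^ ((u + v) * k) * q ^ (k * k) := by ring
    _ = q ^ ((u + v) * k) * q ^ (k * k) := by
        rw [mul_eq_zero.mpr huv.symm, pow_zero, one_mul]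
    _ = (q * q ^ (u + v)) ^ k * qTau q k ^ 2 := by
        rw [← qTau_sq_mul_pow]
        ring

theorem qPoch_zpow_div_add_mul_pow (hq : q ≠ 0) (b : ℂ) {u v : ℕ} (huv : u = 0 ∨ v = 0) (k : ℕ) :
    qPoch (q ^ (1 - (v + k : ℕ) : ℤ) / b) q (u + k) * (q ^ (v + k)) ^ (u + k) =
      qPoch (q / b) q u * qPochHom (q / b * q ^ u) (q * q ^ (u + v)) q k * qTau q k := by
  have scale : q * q ^ (u + v) * (q ^ (-v : ℤ) / b) = q / b * q ^ u := by
    rw [zpow_neg, zpow_natCast]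
    field_simp
    ring
  calc _ = qPoch (q / b) q u * ((q * q ^ (u + v)) ^ k *
        (qPoch (q ^ (1 - k : ℤ) * (q ^ (-v : ℤ) / b)) q k * qTau q k)) * qTau q k := by
        rw [qPoch_zpow_div_add hq b huv, pow_add_pow_add_eq_mul_qTau_sq q huv]
        ring
    _ = _ := by rw [qPoch_zpow_mul_mul_qTau hq, pow_mul_qPochHom, scale, mul_one]

theorem leftTerm_add {y : ℂ} (hy : y ≠ 0) (q b x : ℂ) {u v : ℕ} (huv : u = 0 ∨ v = 0) (k : ℕ) :
    leftTerm q b x y (u + k) (v + k) = leftTerm q b x y u v *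
      (qPoch (q / b * q ^ u) q k * qTau q k * (x * q ^ v) ^ k /
        (qPoch (q * q ^ (u + v)) q k * qPoch q q k)) := by
  calc leftTerm q b x y (u + k) (v + k)
      = qPoch (q / b) q (u + k) * qTau q (v + k) * (y ^ (u + k) * (x / y) ^ (v + k)) /
          (qPoch q q (u + k) * qPoch q q (v + k)) := by
        rw [leftTerm]
        ring
    _ = _ := by
        rw [pow_mul_div_pow_add hy, qPoch_self_add_mul_qPoch_self_add q huv, qPoch_add, qTau_add,
          leftTerm]
        ring

theorem rightTerm_add (hq : q ≠ 0) {y : ℂ} (hy : y ≠ 0) (b x : ℂ) {u v : ℕ}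
    (huv : u = 0 ∨ v = 0) (k : ℕ) :
    rightTerm q b x y (u + k) (v + k) = leftTerm q b x y u v / qPoch x q v *
      (qPochHom (q / b * q ^ u) (q * q ^ (u + v)) q k * qTau q k ^ 2 * (x * q ^ v) ^ k /
        (qPoch q q k * qPoch (x * q ^ v) q k * qPoch (q * q ^ (u + v)) q k)) := by
  calc rightTerm q b x y (u + k) (v + k)
      = qTau q (v + k) * (y ^ (u + k) * (x / y) ^ (v + k)) *
          (qPoch (q ^ (1 - (v + k : ℕ) : ℤ) / b) q (u + k) * (q ^ (v + k)) ^ (u + k)) /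
          (qPoch q q (u + k) * qPoch q q (v + k) * qPoch x q (v + k)) := by
        rw [rightTerm]
        ring
    _ = _ := by
        rw [pow_mul_div_pow_add hy, qPoch_zpow_div_add_mul_pow hq b huv,
          qPoch_self_add_mul_qPoch_self_add q huv, qPoch_add x, qTau_add, leftTerm]
        ring

theorem tsum_diagonal_leftTerm_eq (hq0 : q ≠ 0) (hq1 : ‖q‖ < 1) {x y : ℂ}
    (hx : ∀ n, qPoch x q n ≠ 0) (hy : y ≠ 0) (b : ℂ) {u v : ℕ} (huv : u = 0 ∨ v = 0) :
    ∑' k, leftTerm q b x y (u + k) (v + k) =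
      qPochInf x q * ∑' k, rightTerm q b x y (u + k) (v + k) := by
  have hc := qPoch_mul_pow_ne_zero (qPoch_self_ne_zero hq1) (u + v)
  have hxv := hx v
  simp only [leftTerm_add hy q b x huv, rightTerm_add hq0 hy b x huv, tsum_mul_left]
  rw [tsum_qPoch_mul_qTau_eq hq1 hc (qPoch_mul_pow_ne_zero hx v), qPochInf_eq_qPoch_mul hq1 x v]
  field_simp

theorem tsum_mul_leftTerm_eq (hq0 : q ≠ 0) (hq1 : ‖q‖ < 1) {x y : ℂ}
    (hx : ∀ n, qPoch x q n ≠ 0) (hy : y ≠ 0) {b : ℂ} {A : ℤ → ℂ}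
    (hl : Summable fun p : ℕ × ℕ => A (p.1 - p.2) * leftTerm q b x y p.1 p.2)
    (hr : Summable fun p : ℕ × ℕ => A (p.1 - p.2) * rightTerm q b x y p.1 p.2) :
    ∑' p : ℕ × ℕ, A (p.1 - p.2) * leftTerm q b x y p.1 p.2 =
      qPochInf x q * ∑' p : ℕ × ℕ, A (p.1 - p.2) * rightTerm q b x y p.1 p.2 := by
  have diagonal : ∀ (n : ℤ) (k : ℕ), ((n.toNat + k : ℕ) : ℤ) - ((-n).toNat + k : ℕ) = n := by
    omega
  rw [tsum_eq_tsum_diagonal hl, tsum_eq_tsum_diagonal hr, ← tsum_mul_left]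
  refine tsum_congr fun n => ?_
  simp only [diagonal, tsum_mul_left]
  rw [tsum_diagonal_leftTerm_eq hq0 hq1 hx hy b (by omega), mul_left_comm]

theorem tsum_tsum_mul_leftTerm_eq (hq0 : q ≠ 0) (hq1 : ‖q‖ < 1) {x y : ℂ}
    (hx : ∀ n, qPoch x q n ≠ 0) (hy : y ≠ 0) {b : ℂ} {A : ℤ → ℂ}
    (hl : Summable fun p : ℕ × ℕ => A (p.1 - p.2) * leftTerm q b x y p.1 p.2)
    (hr : Summable fun p : ℕ × ℕ => A (p.1 - p.2) * rightTerm q b x y p.1 p.2) :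
    ∑' (i : ℕ) (j : ℕ), A (i - j) * leftTerm q b x y i j =
      qPochInf x q * ∑' (j : ℕ) (i : ℕ), A (i - j) * rightTerm q b x y i j := by
  rw [Summable.tsum_comm (f := fun i j : ℕ => A (i - j) * rightTerm q b x y i j) hr]
  simpa only [hl.tsum_prod, hr.tsum_prod] using tsum_mul_leftTerm_eq hq0 hq1 hx hy hl hr

end Diagonals

theorem qPoch_ne_zero_of_ne_zpow {x q : ℂ} (hx : ∀ m : ℕ, x ≠ q ^ (-(m : ℤ))) (n : ℕ) :
    qPoch x q n ≠ 0 := by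
  refine prod_ne_zero_iff.mpr fun k _ h => hx k ?_
  rw [zpow_neg, zpow_natCast]
  exact eq_inv_of_mul_eq_one_left (sub_eq_zero.mp h).symm

theorem stmt5 (q : ℂ) (hq0 : 0 < ‖q‖) (hq1 : ‖q‖ < 1)
    (A : ℤ → ℂ) (b x y : ℂ) (hb : b ≠ 0) (hy : y ≠ 0)
    (hx : ∀ m : ℕ, x ≠ q ^ (-(m : ℤ)))
    (h1 : Summable (fun p : ℕ × ℕ => ‖qPoch (q / b) q p.1 * y ^ p.1 *
      A ((p.1 : ℤ) - (p.2 : ℤ)) * (-1 : ℂ) ^ p.2 * q ^ (p.2 * (p.2 - 1) / 2) *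
      (x / y) ^ p.2 / (qPoch q q p.1 * qPoch q q p.2)‖))
    (h2 : Summable (fun p : ℕ × ℕ => ‖(-1 : ℂ) ^ p.2 * q ^ (p.2 * (p.2 - 1) / 2) *
      (x / y) ^ p.2 * A ((p.1 : ℤ) - (p.2 : ℤ)) *
      qPoch (q ^ ((1 : ℤ) - (p.2 : ℤ)) / b) q p.1 * (q ^ p.2 * y) ^ p.1 /
      (qPoch q q p.2 * qPoch x q p.2 * qPoch q q p.1)‖)) :
    ∑' i : ℕ, (qPoch (q / b) q i * y ^ i / qPoch q q i) *
      ∑' j : ℕ, A ((i : ℤ) - (j : ℤ)) * qTau q j * (x / y) ^ j / qPoch q q j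
    = qPochInf x q * ∑' j : ℕ, (qTau q j * (x / y) ^ j / (qPoch q q j * qPoch x q j)) *
      ∑' i : ℕ, A ((i : ℤ) - (j : ℤ)) * qPoch (q ^ ((1 : ℤ) - (j : ℤ)) / b) q i *
        (q ^ j * y) ^ i / qPoch q q i := by
  have hleft : Summable fun p : ℕ × ℕ => A (p.1 - p.2) * leftTerm q b x y p.1 p.2 :=
    h1.of_norm.congr fun p => by
      rw [leftTerm, qTau]
      ring
  have hright : Summable fun p : ℕ × ℕ => A (p.1 - p.2) * rightTerm q b x y p.1 p.2 :=
    h2.of_norm.congr fun p => by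
      rw [rightTerm, qTau]
      ring
  calc _ = ∑' (i : ℕ) (j : ℕ), A (i - j) * leftTerm q b x y i j := by
        simp only [← tsum_mul_left]
        refine tsum_congr fun i => tsum_congr fun j => ?_
        rw [leftTerm]
        ring
    _ = qPochInf x q * ∑' (j : ℕ) (i : ℕ), A (i - j) * rightTerm q b x y i j :=
        tsum_tsum_mul_leftTerm_eq (norm_pos_iff.mp hq0) hq1 (qPoch_ne_zero_of_ne_zpow hx) hy
          hleft hright
    _ = _ := by
        simp only [← tsum_mul_left (a := _ / _)]
        congr 1
        refine tsum_congr fun j => tsum_congr fun i => ?_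
        rw [rightTerm]
        ring
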